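/- Let 0 ≤ α < ω₁, let X = [0,1] × ∏_{t∈(0,1]} X_t where X_t = ℕ with the discrete topology for every t ∈ (0,1], for i ∈ {1,2} let F_i = {y = (y_t)_{t∈(0,1]} ∈ ℕ^{(0,1]} : for every n ∈ ℕ with n ≠ i, the set {t ∈ (0,1] : y_t = n} has at most one element}, let A₁ ⊆ [0,1] be a nonempty set of the functionally additive class α in [0,1] with nonempty complement, and let A₂ = [0,1]∖A₁. Then the set E = (A₁ × F₁) ∪ (A₂ × F₂) is (α+1)-embedded in X. -/

import Mathlib

/-!
The pieces `A₁ × F₁` and `A₂ × F₂` lie in `A₁ × Y` and in its complement, both of multiplicative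
class `α + 1` in `X`, so it suffices to extend multiplicative sets from each piece separately. A
transfinite induction reduces this to class `0`, that is, to zero sets of continuous functions.

Since `F i` is closed under replacing coordinates by `i`, a continuous `f` on `A × F i` depends on
countably many coordinates: otherwise, for some `ε > 0`, uncountably many `t` have a point
`(aₜ, yₜ)` with `yₜ` equal to `i` off a finite set at which replacing the coordinate `t` by `i`
moves `f` by at least `ε`. A Δ-system argument and the Lindelöf property produce a point of
`A × F i` at which these pairs accumulate, contradicting continuity there. If `D` is the countable
set of relevant coordinates, replacing those outside `D` by `i` leaves `f` unchanged and factors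
through the metrizable space `[0,1] × ℕ^D`, in which closures are zero sets.
-/

open Set Topology

/-- A topological space is pseudo-ℵ₁-compact if every locally finite family of
(pairwise distinct) nonempty open subsets is at most countable. -/
def PseudoAleph1Compact (Z : Type*) [TopologicalSpace Z] : Prop :=
  ∀ 𝒰 : Set (Set Z), (∀ U ∈ 𝒰, IsOpen U) → (∀ U ∈ 𝒰, U.Nonempty) →
    LocallyFinite (fun U : 𝒰 => (U : Set Z)) → 𝒰.Countable

/-- `A` is functionally closed in `Z` if it is the zero set of a continuous real function. -/
def FunctionallyClosed {Z : Type*} [TopologicalSpace Z] (A : Set Z) : Prop :=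
  ∃ f : Z → ℝ, Continuous f ∧ A = f ⁻¹' {0}

/-- `A` is functionally open in `Z` if its complement is functionally closed. -/
def FunctionallyOpen {Z : Type*} [TopologicalSpace Z] (A : Set Z) : Prop :=
  FunctionallyClosed Aᶜ

/-- `FunClass Z true α A` : `A` is of the functionally additive class `α` in `Z`;
`FunClass Z false α A` : `A` is of the functionally multiplicative class `α` in `Z`. -/
inductive FunClass (Z : Type*) [TopologicalSpace Z] : Bool → Ordinal.{0} → Set Z → Prop
  | open_ (A : Set Z) (h : FunctionallyOpen A) : FunClass Z true 0 A
  | closed_ (A : Set Z) (h : FunctionallyClosed A) : FunClass Z false 0 A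
  | union (α : Ordinal.{0}) (A : ℕ → Set Z) (β : ℕ → Ordinal.{0}) (hα : α ≠ 0)
      (hβ : ∀ n, β n < α) (h : ∀ n, FunClass Z false (β n) (A n)) :
      FunClass Z true α (⋃ n, A n)
  | inter (α : Ordinal.{0}) (A : ℕ → Set Z) (β : ℕ → Ordinal.{0}) (hα : α ≠ 0)
      (hβ : ∀ n, β n < α) (h : ∀ n, FunClass Z true (β n) (A n)) :
      FunClass Z false α (⋂ n, A n)

/-- `A` is α-embedded in `Z` if every subset of `A` of functionally multiplicative class `α`
in the subspace `A` is the trace on `A` of a set of functionally multiplicative class `α` in `Z`. -/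
def IsAlphaEmbedded {Z : Type*} [TopologicalSpace Z] (α : Ordinal.{0}) (A : Set Z) : Prop :=
  ∀ B : Set Z, B ⊆ A → FunClass ↥A false α (Subtype.val ⁻¹' B) →
    ∃ C : Set Z, FunClass Z false α C ∧ C ∩ A = B

/-- `Z` is α-universal if every subset of `Z` is α-embedded in `Z`. -/
def AlphaUniversal (Z : Type*) [TopologicalSpace Z] (α : Ordinal.{0}) : Prop :=
  ∀ A : Set Z, IsAlphaEmbedded α A

/-- The projection of the product `∀ t, X t` onto the coordinates in `S`. -/
def proj {T : Type*} {X : T → Type*} (S : Set T) (x : ∀ t, X t) : ∀ t : S, X t.1 :=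
  fun t => x t.1

/-- A functionally measurable (Baire) set: a member of some functionally additive or
multiplicative class `α` with `α < ω₁`. -/
def FunctionallyMeasurable {Z : Type*} [TopologicalSpace Z] (A : Set Z) : Prop :=
  ∃ (b : Bool) (β : Ordinal.{0}), β < (Cardinal.aleph 1).ord ∧ FunClass Z b β A

/-- `Y` has a regular `Gδ`-diagonal. -/
def RegularGDeltaDiagonal (Y : Type*) [TopologicalSpace Y] : Prop :=
  ∃ G : ℕ → Set (Y × Y), (∀ n, IsOpen (G n)) ∧
    {p : Y × Y | p.1 = p.2} = ⋂ n, G n ∧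
    {p : Y × Y | p.1 = p.2} = ⋂ n, closure (G n)

/-- The natural numbers `{1, 2, 3, ...}` with the discrete topology
(as a subspace of the discrete space `ℕ`). -/
abbrev PosNat : Type := {n : ℕ // 0 < n}

/-- The product `Y = ℕ^{(0,1]}` where `ℕ = {1,2,...}` is discrete. -/
abbrev Yprod : Type := ↥(Set.Ioc (0 : ℝ) 1) → PosNat

/-- Stone's set `F i = {y ∈ Y : |{t : y t = n}| ≤ 1 for every n ≠ i}`. -/
def Fset (i : PosNat) : Set Yprod :=
  {y | ∀ n : PosNat, n ≠ i → {t : ↥(Set.Ioc (0 : ℝ) 1) | y t = n}.Subsingleton}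

/-- The product `X = [0,1] × ℕ^{(0,1]}`. -/
abbrev Xprod : Type := ↥(Set.Icc (0 : ℝ) 1) × Yprod

/-! ### Functional classes and embedded sets -/

section FunctionalClasses

variable {Z W : Type*} [TopologicalSpace Z] [TopologicalSpace W] {β γ : Ordinal.{0}} {A B : Set Z}

theorem FunctionallyClosed.preimage {g : W → Z} (hg : Continuous g) (hA : FunctionallyClosed A) :
    FunctionallyClosed (g ⁻¹' A) := by
  obtain ⟨f, hf, rfl⟩ := hA
  exact ⟨f ∘ g, hf.comp hg, rfl⟩

theorem functionallyClosed_of_isClosed [TopologicalSpace.PseudoMetrizableSpace Z]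
    (hA : IsClosed A) : FunctionallyClosed A := by
  let _ := TopologicalSpace.pseudoMetrizableSpacePseudoMetric Z
  rcases A.eq_empty_or_nonempty with rfl | hne
  · exact ⟨fun _ => 1, continuous_const, by simp⟩
  · exact ⟨fun x => Metric.infDist x A, Metric.continuous_infDist_pt A,
      Set.ext fun x => hA.mem_iff_infDist_zero hne⟩

theorem functionallyOpen_abs_lt {f : Z → ℝ} (hf : Continuous f) (c : ℝ) :
    FunctionallyOpen {x | |f x| < c} :=
  ⟨fun x => max (c - |f x|) 0, by fun_prop, by ext x; simp⟩

theorem FunctionallyClosed.exists_eq_iInter (hA : FunctionallyClosed A) :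
    ∃ U : ℕ → Set Z, (∀ n, FunctionallyOpen (U n)) ∧ A = ⋂ n, U n := by
  obtain ⟨f, hf, rfl⟩ := hA
  refine ⟨fun n => {x | |f x| < 1 / ((n : ℝ) + 1)}, fun n => functionallyOpen_abs_lt hf _, ?_⟩
  ext x
  simp only [mem_preimage, mem_singleton_iff, mem_iInter, mem_ofPred_eq]
  refine ⟨fun hx n => ?_, fun hx => ?_⟩
  · rw [hx, abs_zero]
    exact Nat.one_div_pos_of_nat
  · by_contra hne
    obtain ⟨n, hn⟩ := exists_nat_one_div_lt (abs_pos.2 hne)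
    exact hn.not_gt (hx n)

theorem FunClass.functionallyClosed (hA : FunClass Z false 0 A) : FunctionallyClosed A := by
  cases hA with
  | closed_ _ hA => exact hA
  | inter _ _ _ h₀ => exact absurd rfl h₀

theorem FunClass.preimage {g : W → Z} (hg : Continuous g) {c : Bool} (hA : FunClass Z c β A) :
    FunClass W c β (g ⁻¹' A) := by
  induction hA with
  | open_ A hA => exact .open_ _ (FunctionallyClosed.preimage hg hA)
  | closed_ A hA => exact .closed_ _ (hA.preimage hg)
  | union α A β hα hβ _ ih =>
    rw [preimage_iUnion]
    exact .union α _ β hα hβ ih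
  | inter α A β hα hβ _ ih =>
    rw [preimage_iInter]
    exact .inter α _ β hα hβ ih

theorem FunClass.compl {c : Bool} (hA : FunClass Z c β A) : FunClass Z (!c) β Aᶜ := by
  induction hA with
  | open_ A hA => exact .closed_ _ hA
  | closed_ A hA => exact .open_ _ (by rwa [FunctionallyOpen, compl_compl])
  | union α A β hα hβ _ ih =>
    rw [compl_iUnion]
    exact .inter α _ β hα hβ ih
  | inter α A β hα hβ _ ih =>
    rw [compl_iInter]
    exact .union α _ β hα hβ ih

theorem FunClass.iInter_of_countable {ι : Type*} [Countable ι] [Nonempty ι] {A : ι → Set Z}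
    {β : ι → Ordinal.{0}} (hγ : γ ≠ 0) (hβ : ∀ i, β i < γ) (hA : ∀ i, FunClass Z true (β i) (A i)) :
    FunClass Z false γ (⋂ i, A i) := by
  obtain ⟨e, he⟩ := exists_surjective_nat ι
  rw [← he.iInter_comp]
  exact .inter γ _ _ hγ (fun n => hβ (e n)) fun n => hA (e n)

theorem FunClass.multiplicative_of_additive (hA : FunClass Z true β A) (hβγ : β < γ) :
    FunClass Z false γ A := by
  rw [← iInter_const (ι := Unit) A]
  exact iInter_of_countable (bot_lt_of_lt hβγ).ne' (fun _ => hβγ) fun _ => hA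

theorem FunClass.multiplicative_mono (hA : FunClass Z false β A) (hβγ : β ≤ γ) :
    FunClass Z false γ A := by
  rcases hβγ.eq_or_lt with rfl | hlt
  · exact hA
  have hγ : γ ≠ 0 := (bot_lt_of_lt hlt).ne'
  cases hA with
  | closed_ A hA =>
    obtain ⟨U, hU, rfl⟩ := hA.exists_eq_iInter
    exact .inter γ U _ hγ (fun _ => hlt) fun n => .open_ _ (hU n)
  | inter _ A δ _ hδ hA => exact .inter γ A δ hγ (fun n => (hδ n).trans hlt) hA

theorem FunClass.additive_mono (hA : FunClass Z true β A) (hβγ : β ≤ γ) : FunClass Z true γ A := by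
  simpa only [compl_compl, Bool.not_false] using (hA.compl.multiplicative_mono hβγ).compl

theorem FunClass.multiplicative_inter (hA : FunClass Z false γ A) (hB : FunClass Z false γ B) :
    FunClass Z false γ (A ∩ B) := by
  cases hA with
  | closed_ A hA =>
    obtain ⟨f, hf, rfl⟩ := hA
    cases hB with
    | closed_ B hB =>
      obtain ⟨g, hg, rfl⟩ := hB
      refine .closed_ _ ⟨fun x => |f x| + |g x|, by fun_prop, ?_⟩
      ext x
      simp [add_eq_zero_iff_of_nonneg (abs_nonneg (f x)) (abs_nonneg (g x))]
    | inter _ _ _ h₀ => exact absurd rfl h₀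
  | inter _ A δ hγ hδ hA =>
    cases hB with
    | closed_ => exact absurd rfl hγ
    | inter _ B ε _ hε hB =>
      rw [show (⋂ n, A n) ∩ ⋂ n, B n = ⋂ i, Sum.elim A B i from
        (iInter_sum (s := Sum.elim A B)).symm]
      exact iInter_of_countable (β := Sum.elim δ ε) hγ (Sum.rec hδ hε) (Sum.rec hA hB)

theorem FunClass.additive_union (hA : FunClass Z true γ A) (hB : FunClass Z true γ B) :
    FunClass Z true γ (A ∪ B) := by
  simpa only [compl_inter, compl_compl, Bool.not_false] using
    (hA.compl.multiplicative_inter hB.compl).compl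

theorem FunClass.multiplicative_union (hA : FunClass Z false γ A) (hB : FunClass Z false γ B) :
    FunClass Z false γ (A ∪ B) := by
  cases hA with
  | closed_ A hA =>
    obtain ⟨f, hf, rfl⟩ := hA
    cases hB with
    | closed_ B hB =>
      obtain ⟨g, hg, rfl⟩ := hB
      exact .closed_ _ ⟨fun x => f x * g x, by fun_prop, by ext x; simp⟩
    | inter _ _ _ h₀ => exact absurd rfl h₀
  | inter _ A δ hγ hδ hA =>
    cases hB with
    | closed_ => exact absurd rfl hγ
    | inter _ B ε _ hε hB =>
      rw [show (⋂ n, A n) ∪ ⋂ n, B n = ⋂ p : ℕ × ℕ, A p.1 ∪ B p.2 by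
        ext x
        simp only [mem_union, mem_iInter, Prod.forall, forall_or_left, forall_or_right]]
      exact iInter_of_countable hγ (fun p => max_lt (hδ p.1) (hε p.2)) fun p =>
        ((hA p.1).additive_mono (le_max_left _ _)).additive_union
          ((hB p.2).additive_mono (le_max_right _ _))

theorem IsAlphaEmbedded.exists_functionallyClosed {P : Set Z} (hP : IsAlphaEmbedded 0 P)
    {B : Set P} (hB : FunctionallyClosed B) :
    ∃ C : Set Z, FunctionallyClosed C ∧ Subtype.val ⁻¹' C = B := by
  obtain ⟨C, hC, hCB⟩ := hP (Subtype.val '' B) (Subtype.coe_image_subset P B) <| by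
    rw [preimage_image_eq B Subtype.val_injective]
    exact .closed_ B hB
  refine ⟨C, hC.functionallyClosed, ?_⟩
  rw [← Subtype.preimage_coe_inter_self, hCB, preimage_image_eq B Subtype.val_injective]

theorem FunClass.exists_preimage_val_eq {P : Set Z} (hP : IsAlphaEmbedded 0 P) {c : Bool}
    {B : Set P} (hB : FunClass P c β B) :
    ∃ C : Set Z, FunClass Z c β C ∧ Subtype.val ⁻¹' C = B := by
  induction hB with
  | open_ B hB =>
    obtain ⟨C, hC, hCB⟩ := hP.exists_functionallyClosed hB
    refine ⟨Cᶜ, (FunClass.closed_ C hC).compl, ?_⟩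
    rw [preimage_compl, hCB, compl_compl]
  | closed_ B hB =>
    obtain ⟨C, hC, hCB⟩ := hP.exists_functionallyClosed hB
    exact ⟨C, .closed_ C hC, hCB⟩
  | union α B β hα hβ _ ih =>
    choose C hC hCB using ih
    exact ⟨⋃ n, C n, .union α C β hα hβ hC, by simp only [preimage_iUnion, hCB]⟩
  | inter α B β hα hβ _ ih =>
    choose C hC hCB using ih
    exact ⟨⋂ n, C n, .inter α C β hα hβ hC, by simp only [preimage_iInter, hCB]⟩

theorem IsAlphaEmbedded.of_zero {P : Set Z} (hP : IsAlphaEmbedded 0 P) (γ : Ordinal.{0}) :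
    IsAlphaEmbedded γ P := by
  intro B hBP hB
  obtain ⟨C, hC, hCB⟩ := hB.exists_preimage_val_eq hP
  refine ⟨C, hC, ?_⟩
  rw [inter_comm, Subtype.preimage_coe_eq_preimage_coe_iff.1 hCB, inter_eq_right.2 hBP]

theorem IsAlphaEmbedded.exists_inter_eq_inter {P Q B : Set Z} (hP : IsAlphaEmbedded γ P)
    (hPQ : P ⊆ Q) (hB : FunClass Q false γ (Subtype.val ⁻¹' B)) :
    ∃ C : Set Z, FunClass Z false γ C ∧ C ∩ P = B ∩ P :=
  hP (B ∩ P) inter_subset_right <| by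
    rw [inter_comm, Subtype.preimage_coe_self_inter]
    exact hB.preimage (continuous_inclusion hPQ)

theorem IsAlphaEmbedded.union {P Q S : Set Z} (hP : IsAlphaEmbedded γ P)
    (hQ : IsAlphaEmbedded γ Q) (hS : FunClass Z false γ S) (hSc : FunClass Z false γ Sᶜ)
    (hPS : P ⊆ S) (hQS : Q ⊆ Sᶜ) : IsAlphaEmbedded γ (P ∪ Q) := by
  intro B hBPQ hB
  obtain ⟨C, hC, hCP⟩ := hP.exists_inter_eq_inter subset_union_left hB
  obtain ⟨D, hD, hDQ⟩ := hQ.exists_inter_eq_inter subset_union_right hB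
  refine ⟨C ∩ S ∪ D ∩ Sᶜ,
    (hC.multiplicative_inter hS).multiplicative_union (hD.multiplicative_inter hSc), ?_⟩
  have hP_trace : (C ∩ S ∪ D ∩ Sᶜ) ∩ P = B ∩ P := by
    rw [← hCP]
    grind
  have hQ_trace : (C ∩ S ∪ D ∩ Sᶜ) ∩ Q = B ∩ Q := by
    rw [← hDQ]
    grind
  rw [inter_union_distrib_left, hP_trace, hQ_trace, ← inter_union_distrib_left,
    inter_eq_left.2 hBPQ]

end FunctionalClasses

/-! ### Accumulation points of finitely supported families -/

section Accumulation

open Filter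

-- A filter version of the Δ-system lemma, with root `r`.
theorem exists_finset_eventually_notMem_of_card_le {ι κ : Type*} (n : ℕ) (l : Filter ι) [NeBot l]
    [CountableInterFilter l] (S : ι → Finset κ) (hS : ∀ᶠ i in l, (S i).card ≤ n) :
    ∃ (r : Finset κ) (l' : Filter ι), l' ≤ l ∧ NeBot l' ∧ CountableInterFilter l' ∧
      ∀ x ∉ r, ∀ᶠ i in l', x ∉ S i := by
  classical
  induction n generalizing l S with
  | zero =>
    refine ⟨∅, l, le_rfl, ‹_›, ‹_›, fun x _ => ?_⟩
    filter_upwards [hS] with i hi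
    simp [Finset.card_eq_zero.1 (Nat.le_zero.1 hi)]
  | succ n ih =>
    by_cases hx : ∀ x, ∀ᶠ i in l, x ∉ S i
    · exact ⟨∅, l, le_rfl, ‹_›, ‹_›, fun x _ => hx x⟩
    obtain ⟨x, hx⟩ := not_forall.1 hx
    have : NeBot (l ⊓ 𝓟 {i | x ∈ S i}) := frequently_mem_iff_neBot.1 hx
    have hcard : ∀ᶠ i in l ⊓ 𝓟 {i | x ∈ S i}, ((S i).erase x).card ≤ n := by
      filter_upwards [hS.filter_mono inf_le_left, mem_inf_of_right (mem_principal_self _)]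
        with i hi hxi
      rw [Finset.card_erase_of_mem hxi]
      omega
    obtain ⟨r, l', hl', hne, hcount, hr⟩ := ih _ (fun i => (S i).erase x) hcard
    refine ⟨insert x r, l', hl'.trans inf_le_left, hne, hcount, fun z hz => ?_⟩
    rw [Finset.mem_insert, not_or] at hz
    filter_upwards [hr z hz.2] with i hi hzi using hi (Finset.mem_erase.2 ⟨hz.1, hzi⟩)

theorem exists_finset_eventually_notMem {ι κ : Type*} (l : Filter ι) [NeBot l]
    [CountableInterFilter l] (S : ι → Finset κ) :
    ∃ (r : Finset κ) (l' : Filter ι), l' ≤ l ∧ NeBot l' ∧ CountableInterFilter l' ∧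
      ∀ x ∉ r, ∀ᶠ i in l', x ∉ S i := by
  obtain ⟨n, hn⟩ : ∃ n, ∃ᶠ i in l, (S i).card = n := by
    by_contra! h
    have hne : ∀ᶠ i in l, ∀ n, (S i).card ≠ n :=
      eventually_countable_forall.2 fun n => h n
    obtain ⟨i, hi⟩ := hne.exists
    exact hi _ rfl
  have : NeBot (l ⊓ 𝓟 {i | (S i).card = n}) := frequently_mem_iff_neBot.1 hn
  obtain ⟨r, l', hl', h⟩ := exists_finset_eventually_notMem_of_card_le n
    (l ⊓ 𝓟 {i | (S i).card = n}) S (mem_inf_of_right fun _ hi => le_of_eq hi)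
  exact ⟨r, l', hl'.trans inf_le_left, h⟩

theorem exists_tendsto_piecewise_of_finite_support {ι K T : Type*} [DecidableEq T] {X : T → Type*}
    [TopologicalSpace K] [SecondCountableTopology K] [∀ t, TopologicalSpace (X t)]
    [∀ t, SecondCountableTopology (X t)] {b : ∀ t, X t} (l : Filter ι) [NeBot l]
    [CountableInterFilter l] (a : ι → K) (y : ι → ∀ t, X t) (S : ι → Finset T)
    (hS : ∀ i, ∀ t ∉ S i, y i t = b t) :
    ∃ (i₀ : ι) (r : Finset T) (l' : Filter ι), l' ≤ l ∧ NeBot l' ∧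
      Tendsto a l' (𝓝 (a i₀)) ∧ Tendsto y l' (𝓝 (r.piecewise (y i₀) b)) := by
  obtain ⟨r, l₁, hl₁, _, _, hr⟩ := exists_finset_eventually_notMem l S
  let φ : ι → K × (∀ t : r, X t) := fun i => (a i, fun t => y i t)
  obtain ⟨_, ⟨i₀, rfl⟩, hi₀⟩ :=
    HereditarilyLindelofSpace.isLindelof (range φ) (f := map φ l₁)
      (le_principal_iff.2 range_mem_map)
  obtain ⟨U, hU, hφ⟩ := mapClusterPt_iff_ultrafilter.1 hi₀
  rw [Prod.tendsto_iff, tendsto_pi_nhds] at hφ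
  refine ⟨i₀, r, U, hU.trans hl₁, inferInstance, hφ.1, tendsto_pi_nhds.2 fun t => ?_⟩
  by_cases ht : t ∈ r
  · rw [Finset.piecewise_eq_of_mem _ _ _ ht]
    exact hφ.2 ⟨t, ht⟩
  · rw [Finset.piecewise_eq_of_notMem _ _ _ ht]
    refine tendsto_const_nhds.congr' ?_
    filter_upwards [hU (hr t ht)] with i hi using (hS i t hi).symm

end Accumulation

/-! ### Sets closed under resetting coordinates -/

section Reset

open Filter

variable {K T M : Type*} {X : T → Type*} {b : ∀ t, X t} {A : Set K} {F : Set (∀ t, X t)}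

/-- `F` is closed under resetting any set of coordinates to the corresponding coordinates of the
base point `b`. Stone's set `Fset i` has this property for the constant base point `i`. -/
def IsResetClosed (b : ∀ t, X t) (F : Set (∀ t, X t)) : Prop :=
  ∀ y ∈ F, ∀ z : ∀ t, X t, (∀ t, z t = y t ∨ z t = b t) → z ∈ F

theorem IsResetClosed.piecewise_mem (hF : IsResetClosed b F) {y : ∀ t, X t} (hy : y ∈ F)
    (D : Set T) [∀ t, Decidable (t ∈ D)] : D.piecewise y b ∈ F :=
  hF y hy _ fun t => by by_cases ht : t ∈ D <;> simp [ht]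

theorem IsResetClosed.finset_piecewise_mem [DecidableEq T] (hF : IsResetClosed b F)
    {y : ∀ t, X t} (hy : y ∈ F) (S : Finset T) : S.piecewise y b ∈ F :=
  hF y hy _ fun t => by by_cases ht : t ∈ S <;> simp [ht]

theorem IsResetClosed.update_mem [DecidableEq T] (hF : IsResetClosed b F) {y : ∀ t, X t}
    (hy : y ∈ F) (t : T) : Function.update y t (b t) ∈ F :=
  hF y hy _ fun s => by rcases eq_or_ne s t with rfl | hs <;> simp [*]

/-- The coordinates whose resetting to the base point `b` changes `f` somewhere on `A ×ˢ F`: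
those on which the restriction of `f` really depends. -/
def resetSensitive [DecidableEq T] (f : K × (∀ t, X t) → M) (b : ∀ t, X t) (A : Set K)
    (F : Set (∀ t, X t)) : Set T :=
  {t | ∃ a ∈ A, ∃ y ∈ F, f (a, Function.update y t (b t)) ≠ f (a, y)}

variable [TopologicalSpace K] [∀ t, TopologicalSpace (X t)]

theorem tendsto_finset_piecewise_atTop [DecidableEq T] (y z : ∀ t, X t) :
    Tendsto (fun S : Finset T => S.piecewise y z) atTop (𝓝 y) := by
  refine tendsto_pi_nhds.2 fun t => tendsto_const_nhds.congr' ?_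
  filter_upwards [eventually_ge_atTop {t}] with S hS
  exact (Finset.piecewise_eq_of_mem S y z (Finset.singleton_subset_iff.1 hS)).symm

theorem tendsto_apply_prodMk_of_continuousOn [TopologicalSpace M] {f : K × (∀ t, X t) → M}
    (hf : ContinuousOn f (A ×ˢ F)) {ι : Type*} {l : Filter ι} {u : ι → K} {v : ι → ∀ t, X t} {a : K}
    {y : ∀ t, X t} (ha : a ∈ A) (hy : y ∈ F) (hu : Tendsto u l (𝓝 a)) (hv : Tendsto v l (𝓝 y))
    (huA : ∀ i, u i ∈ A) (hvF : ∀ i, v i ∈ F) : Tendsto (fun i => f (u i, v i)) l (𝓝 (f (a, y))) :=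
  (hf (a, y) ⟨ha, hy⟩).tendsto.comp <|
    tendsto_nhdsWithin_iff.2 ⟨hu.prodMk_nhds hv, .of_forall fun i => ⟨huA i, hvF i⟩⟩

theorem IsResetClosed.exists_finite_support_of_mem_resetSensitive [DecidableEq T]
    [TopologicalSpace M] [T2Space M] {f : K × (∀ t, X t) → M} (hF : IsResetClosed b F)
    (hf : ContinuousOn f (A ×ˢ F)) {t : T} (ht : t ∈ resetSensitive f b A F) :
    ∃ a ∈ A, ∃ y ∈ F, (∃ S : Finset T, ∀ s ∉ S, y s = b s) ∧
      f (a, Function.update y t (b t)) ≠ f (a, y) := by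
  obtain ⟨a, ha, y, hy, hne⟩ := ht
  have hyS : ∀ S : Finset T, S.piecewise y b ∈ F := hF.finset_piecewise_mem hy
  have hlim := tendsto_finset_piecewise_atTop y b
  have hlim_update : Tendsto (fun S : Finset T => Function.update (S.piecewise y b) t (b t)) atTop
      (𝓝 (Function.update y t (b t))) := hlim.update t tendsto_const_nhds
  by_contra! h
  refine hne (tendsto_nhds_unique
    (tendsto_apply_prodMk_of_continuousOn hf ha (hF.update_mem hy t) tendsto_const_nhds
      hlim_update (fun _ => ha) fun S => hF.update_mem (hyS S) t) ?_)
  refine (tendsto_apply_prodMk_of_continuousOn hf ha hy tendsto_const_nhds hlim (fun _ => ha)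
    hyS).congr fun S => (h a ha _ (hyS S) ⟨S, fun s hs => ?_⟩).symm
  exact Finset.piecewise_eq_of_notMem S y b hs

theorem IsResetClosed.countable_of_le_dist [DecidableEq T] [SecondCountableTopology K]
    [∀ t, SecondCountableTopology (X t)] [PseudoMetricSpace M] {f : K × (∀ t, X t) → M}
    (hF : IsResetClosed b F) (hf : ContinuousOn f (A ×ˢ F)) {ε : ℝ} (hε : 0 < ε) {E : Set T}
    (hE : ∀ t : E, ∃ a ∈ A, ∃ y ∈ F, (∃ S : Finset T, ∀ s ∉ S, y s = b s) ∧
      ε ≤ dist (f (a, Function.update y t (b t))) (f (a, y))) : E.Countable := by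
  by_contra hcount
  choose a ha y hy hsupp hdist using hE
  choose S hS using hsupp
  have : NeBot (cocountable : Filter E) := by
    rw [neBot_iff, Ne, ← empty_mem_iff_bot, mem_cocountable, compl_empty, countable_univ_iff]
    exact hcount
  have : CountableInterFilter (cocountable : Filter E) :=
    CardinalInterFilter.toCountableInterFilter _ Cardinal.aleph0_lt_aleph_one
  obtain ⟨t₀, r, l, hl, _, hla, hly⟩ :=
    exists_tendsto_piecewise_of_finite_support cocountable a y S hS
  have hmem : r.piecewise (y t₀) b ∈ F := hF.finset_piecewise_mem (hy t₀) r
  -- A fixed coordinate `s` is reset for at most one `t`, so resetting does not change the limit.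
  have hly_update : Tendsto (fun t : E => Function.update (y t) t (b t)) l
      (𝓝 (r.piecewise (y t₀) b)) := by
    refine tendsto_pi_nhds.2 fun s => (tendsto_pi_nhds.1 hly s).congr' ?_
    have hs : ∀ᶠ t : E in cocountable, s ≠ t := mem_cocountable.2 <|
      ((finite_singleton s).preimage Subtype.val_injective.injOn).countable.mono fun t ht =>
        (not_not.1 ht).symm
    filter_upwards [hl hs] with t ht
    rw [Function.update_of_ne ht]
  have hlim := (tendsto_apply_prodMk_of_continuousOn hf (ha t₀) hmem hla hly_update ha
    fun t => hF.update_mem (hy t) t).dist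
      (tendsto_apply_prodMk_of_continuousOn hf (ha t₀) hmem hla hly ha hy)
  rw [dist_self] at hlim
  exact hε.not_ge (ge_of_tendsto' hlim hdist)

theorem IsResetClosed.countable_resetSensitive [DecidableEq T] [SecondCountableTopology K]
    [∀ t, SecondCountableTopology (X t)] [MetricSpace M] {f : K × (∀ t, X t) → M}
    (hF : IsResetClosed b F) (hf : ContinuousOn f (A ×ˢ F)) :
    (resetSensitive f b A F).Countable := by
  let E (n : ℕ) : Set T := {t | ∃ a ∈ A, ∃ y ∈ F, (∃ S : Finset T, ∀ s ∉ S, y s = b s) ∧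
    1 / ((n : ℝ) + 1) ≤ dist (f (a, Function.update y t (b t))) (f (a, y))}
  have hE (n : ℕ) : (E n).Countable :=
    hF.countable_of_le_dist hf Nat.one_div_pos_of_nat fun t => t.2
  refine (countable_iUnion hE).mono fun t ht => ?_
  obtain ⟨a, ha, y, hy, hS, hne⟩ := hF.exists_finite_support_of_mem_resetSensitive hf ht
  obtain ⟨n, hn⟩ := exists_nat_one_div_lt (dist_pos.2 hne)
  exact mem_iUnion.2 ⟨n, a, ha, y, hy, hS, hn.le⟩

theorem IsResetClosed.apply_piecewise_of_resetSensitive_subset [DecidableEq T]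
    [TopologicalSpace M] [T2Space M] {f : K × (∀ t, X t) → M} (hF : IsResetClosed b F)
    (hf : ContinuousOn f (A ×ˢ F)) {D : Set T} [∀ t, Decidable (t ∈ D)]
    (hD : resetSensitive f b A F ⊆ D) {a : K} (ha : a ∈ A) {y : ∀ t, X t} (hy : y ∈ F) :
    f (a, D.piecewise y b) = f (a, y) := by
  have hmem : ∀ R : Finset T, R.piecewise (D.piecewise y b) y ∈ F := fun R =>
    hF y hy _ fun t => by by_cases ht : t ∈ R <;> by_cases htD : t ∈ D <;> simp [ht, htD]
  have hfinite : ∀ R : Finset T, f (a, R.piecewise (D.piecewise y b) y) = f (a, y) := by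
    intro R
    induction R using Finset.induction_on with
    | empty => rw [Finset.piecewise_empty]
    | insert t R htR ih =>
      rw [Finset.piecewise_insert, ← ih]
      by_cases htD : t ∈ D
      · rw [piecewise_eq_of_mem D y b htD, ← Finset.piecewise_eq_of_notMem R _ y htR,
          Function.update_eq_self]
      · rw [piecewise_eq_of_notMem D y b htD]
        by_contra hne
        exact htD (hD ⟨a, ha, _, hmem R, hne⟩)
  refine tendsto_nhds_unique (tendsto_apply_prodMk_of_continuousOn hf ha (hF.piecewise_mem hy D)
    tendsto_const_nhds (tendsto_finset_piecewise_atTop _ y) (fun _ => ha) hmem) ?_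
  exact tendsto_const_nhds.congr fun R => (hfinite R).symm

theorem pseudoMetrizableSpace_pi_of_countable [Countable T]
    [∀ t, TopologicalSpace.PseudoMetrizableSpace (X t)] :
    TopologicalSpace.PseudoMetrizableSpace (∀ t, X t) :=
  let := fun t => TopologicalSpace.pseudoMetrizableSpaceUniformity (X t)
  have := fun t => TopologicalSpace.pseudoMetrizableSpaceUniformity_countably_generated (X t)
  inferInstance

theorem functionallyClosed_preimage_piecewise [TopologicalSpace.PseudoMetrizableSpace K]
    [∀ t, TopologicalSpace.PseudoMetrizableSpace (X t)] {D : Set T}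
    [∀ t, Decidable (t ∈ D)] (hD : D.Countable)
    {H : Set (K × (∀ t, X t))} (hH : IsClosed H) :
    FunctionallyClosed ((fun p : K × (∀ t, X t) => (p.1, D.piecewise p.2 b)) ⁻¹' H) := by
  have : Countable D := hD.to_subtype
  have : TopologicalSpace.PseudoMetrizableSpace (∀ t : D, X t) :=
    pseudoMetrizableSpace_pi_of_countable
  let extend : K × (∀ t : D, X t) → K × (∀ t, X t) :=
    fun q => (q.1, fun t => if ht : t ∈ D then q.2 ⟨t, ht⟩ else b t)
  have hextend : Continuous extend := by
    refine continuous_fst.prodMk (continuous_pi fun t => ?_)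
    by_cases ht : t ∈ D
    · simp only [ht, dite_true]
      fun_prop
    · simp only [ht, dite_false]
      fun_prop
  have hproj : Continuous fun p : K × (∀ t, X t) => (p.1, proj D p.2) :=
    continuous_fst.prodMk (continuous_pi fun t => (continuous_apply t.1).comp continuous_snd)
  have hcomp : (fun p : K × (∀ t, X t) => (p.1, D.piecewise p.2 b)) =
      extend ∘ fun p => (p.1, proj D p.2) := by
    funext p
    refine Prod.ext rfl (funext fun t => ?_)
    by_cases ht : t ∈ D <;> simp [extend, proj, ht]
  rw [hcomp, preimage_comp]
  exact (functionallyClosed_of_isClosed (hH.preimage hextend)).preimage hproj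

theorem IsResetClosed.isAlphaEmbedded_zero [SecondCountableTopology K]
    [TopologicalSpace.PseudoMetrizableSpace K] [∀ t, SecondCountableTopology (X t)]
    [∀ t, TopologicalSpace.PseudoMetrizableSpace (X t)] (hF : IsResetClosed b F) (A : Set K) :
    IsAlphaEmbedded 0 (A ×ˢ F) := by
  classical
  intro B hBP hB
  obtain ⟨g, hg, hBg⟩ : FunctionallyClosed (Subtype.val ⁻¹' B : Set ↥(A ×ˢ F)) :=
    hB.functionallyClosed
  let f : K × (∀ t, X t) → ℝ := Function.extend Subtype.val g 0
  have hfg : ∀ p : ↥(A ×ˢ F), f p = g p := Subtype.val_injective.extend_apply g 0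
  have hf : ContinuousOn f (A ×ˢ F) :=
    continuousOn_iff_continuous_domRestrict.2 (hg.congr fun p => (hfg p).symm)
  have hBf : ∀ p ∈ A ×ˢ F, p ∈ B ↔ f p = 0 := fun p hp => by
    rw [hfg ⟨p, hp⟩]
    exact Set.ext_iff.1 hBg ⟨p, hp⟩
  let D := resetSensitive f b A F
  have hreset : ∀ p ∈ A ×ˢ F, (p.1, D.piecewise p.2 b) ∈ A ×ˢ F := fun p hp =>
    ⟨hp.1, hF.piecewise_mem hp.2 D⟩
  have hf_reset : ∀ p ∈ A ×ˢ F, f (p.1, D.piecewise p.2 b) = f p := fun p hp =>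
    hF.apply_piecewise_of_resetSensitive_subset hf subset_rfl hp.1 hp.2
  refine ⟨_, .closed_ _ (functionallyClosed_preimage_piecewise (b := b)
    (hF.countable_resetSensitive hf) (isClosed_closure (s := B))), ?_⟩
  ext p
  refine ⟨fun ⟨hpcl, hp⟩ => ?_, fun hpB => ⟨subset_closure ?_, hBP hpB⟩⟩
  · have hzero : f (p.1, D.piecewise p.2 b) ∈ closure {0} :=
      ((hf _ (hreset p hp)).mono hBP).mem_closure hpcl fun q hq => (hBf q (hBP hq)).1 hq
    rw [hBf p hp, ← hf_reset p hp]
    simpa using hzero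
  · have hp := hBP hpB
    rw [hBf _ (hreset p hp), hf_reset p hp]
    exact (hBf p hp).1 hpB

end Reset

theorem isResetClosed_Fset (i : PosNat) : IsResetClosed (fun _ => i) (Fset i) := by
  intro y hy z hz n hn
  refine (hy n hn).anti fun t ht => ?_
  exact (hz t).elim (fun h => h.symm.trans ht) fun h => absurd (ht.symm.trans h) hn

theorem statement17_general {K T : Type*} {X : T → Type*} [TopologicalSpace K]
    [SecondCountableTopology K] [TopologicalSpace.PseudoMetrizableSpace K]
    [∀ t, TopologicalSpace (X t)] [∀ t, SecondCountableTopology (X t)]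
    [∀ t, TopologicalSpace.PseudoMetrizableSpace (X t)] {b₁ b₂ : ∀ t, X t}
    {F₁ F₂ : Set (∀ t, X t)} (hF₁ : IsResetClosed b₁ F₁) (hF₂ : IsResetClosed b₂ F₂)
    {α : Ordinal.{0}} {A : Set K} (hA : FunClass K true α A) :
    IsAlphaEmbedded (α + 1) (A ×ˢ F₁ ∪ Aᶜ ×ˢ F₂) := by
  have hlt : α < α + 1 := Order.lt_add_one_iff.2 le_rfl
  have hS : FunClass (K × (∀ t, X t)) false (α + 1) (Prod.fst ⁻¹' A) :=
    (hA.multiplicative_of_additive hlt).preimage continuous_fst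
  have hSc : FunClass (K × (∀ t, X t)) false (α + 1) (Prod.fst ⁻¹' A)ᶜ :=
    (hA.compl.multiplicative_mono hlt.le).preimage continuous_fst
  exact ((hF₁.isAlphaEmbedded_zero A).of_zero (α + 1)).union
    ((hF₂.isAlphaEmbedded_zero Aᶜ).of_zero (α + 1)) hS hSc (fun _ hp => hp.1) fun _ hp => hp.1

/-- if `A₁ ⊆ [0,1]` is a nonempty set of the functionally additive class
`α` in `[0,1]` with nonempty complement and `A₂ = [0,1] ∖ A₁`, then
`E = (A₁ × F₁) ∪ (A₂ × F₂)` is (α+1)-embedded in `X = [0,1] × ℕ^{(0,1]}`. -/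
theorem statement17 (α : Ordinal.{0}) (hα : α < (Cardinal.aleph 1).ord)
    (A₁ : Set ↥(Set.Icc (0 : ℝ) 1)) (hne : A₁.Nonempty) (hne' : A₁ᶜ.Nonempty)
    (hadd : FunClass ↥(Set.Icc (0 : ℝ) 1) true α A₁) :
    IsAlphaEmbedded (α + 1)
      ({p : Xprod | p.1 ∈ A₁ ∧ p.2 ∈ Fset ⟨1, one_pos⟩} ∪
        {p : Xprod | p.1 ∈ A₁ᶜ ∧ p.2 ∈ Fset ⟨2, two_pos⟩}) :=
  statement17_general (isResetClosed_Fset _) (isResetClosed_Fset _) hadd
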